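/- Let d be a pseudo symmetric design satisfying ∑_{s∈Q} p_s q_s′(x*) = 0 (where q_s′ is the derivative of q_s), ∑_{s∈Q} p_s = 1, and p_s = 0 for every s ∉ Q. Then for every λ0 ∈ ℝ and every exchangeable prior g, d is E_{g,λ0}-optimal. -/

import Mathlib

open Matrix MeasureTheory
open scoped Classical

noncomputable section

/-- A treatment sequence: assigns a treatment in `Fin t` to each period in `Fin p`. -/
abbrev TrtSeq (p t : ℕ) := Fin p → Fin t

/-- Treatment/period incidence matrix `T_s`. -/
def Tmat {p t : ℕ} (s : TrtSeq p t) : Matrix (Fin p) (Fin t) ℝ :=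
  Matrix.of fun k i => if s k = i then 1 else 0

/-- Carryover incidence matrix `F_s`: first row zero, row `k` records the treatment
in period `k-1`. -/
def Fmat {p t : ℕ} (s : TrtSeq p t) : Matrix (Fin p) (Fin t) ℝ :=
  Matrix.of fun k i =>
    if (k : ℕ) = 0 then 0
    else if s ⟨(k : ℕ) - 1, Nat.lt_of_le_of_lt (Nat.sub_le _ _) k.isLt⟩ = i then 1 else 0

/-- The all-ones `m × m` matrix `J_m`. -/
def Jmat (m : ℕ) : Matrix (Fin m) (Fin m) ℝ := Matrix.of fun _ _ => 1

/-- `B_t = I_t - J_t / t`. -/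
def Bmat (t : ℕ) : Matrix (Fin t) (Fin t) ℝ := 1 - ((t : ℝ))⁻¹ • Jmat t

/-- `B̃ = Σ⁻¹ - Σ⁻¹ J_p Σ⁻¹ / (1_p' Σ⁻¹ 1_p)`. -/
def Btil {p : ℕ} (S : Matrix (Fin p) (Fin p) ℝ) : Matrix (Fin p) (Fin p) ℝ :=
  S⁻¹ - (((fun _ => (1 : ℝ)) : Fin p → ℝ) ⬝ᵥ (S⁻¹ *ᵥ fun _ => (1 : ℝ)))⁻¹ •
    (S⁻¹ * Jmat p * S⁻¹)

/-- `G_1(s) = T_s`, `G_2(s) = F_s`. -/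
def Gmat {p t : ℕ} (i : Fin 2) (s : TrtSeq p t) : Matrix (Fin p) (Fin t) ℝ :=
  if i = 0 then Tmat s else Fmat s

/-- An approximate design: nonnegative weights summing to one. -/
def IsDesign {p t : ℕ} (w : TrtSeq p t → ℝ) : Prop :=
  (∀ s, 0 ≤ w s) ∧ ∑ s : TrtSeq p t, w s = 1

/-- `Ĉ_{sij} = B_t G_i(s)' B̃ G_j(s) B_t`. -/
def Chat {p t : ℕ} (S : Matrix (Fin p) (Fin p) ℝ) (s : TrtSeq p t) (i j : Fin 2) :
    Matrix (Fin t) (Fin t) ℝ :=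
  Bmat t * (Gmat i s)ᵀ * Btil S * Gmat j s * Bmat t

/-- `c_{sij} = tr Ĉ_{sij}`. -/
def cseq {p t : ℕ} (S : Matrix (Fin p) (Fin p) ℝ) (s : TrtSeq p t) (i j : Fin 2) : ℝ :=
  (Chat S s i j).trace

/-- `Ĉ_{dij} = n ∑_s p_s Ĉ_{sij}`. -/
def ChatD {p t : ℕ} (n : ℕ) (S : Matrix (Fin p) (Fin p) ℝ) (w : TrtSeq p t → ℝ)
    (i j : Fin 2) : Matrix (Fin t) (Fin t) ℝ :=
  (n : ℝ) • ∑ s : TrtSeq p t, w s • Chat S s i j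

/-- `C_{dij} = Ĉ_{dij} - n (∑_s p_s G_i(s) B_t)' B̃ (∑_s p_s G_j(s) B_t)`. -/
def CD {p t : ℕ} (n : ℕ) (S : Matrix (Fin p) (Fin p) ℝ) (w : TrtSeq p t → ℝ)
    (i j : Fin 2) : Matrix (Fin t) (Fin t) ℝ :=
  ChatD n S w i j -
    (n : ℝ) • ((∑ s : TrtSeq p t, w s • (Gmat i s * Bmat t))ᵀ * Btil S *
      (∑ s : TrtSeq p t, w s • (Gmat j s * Bmat t)))

/-- `c_{dij} = tr Ĉ_{dij} = n ∑_s p_s c_{sij}`. -/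
def cD {p t : ℕ} (n : ℕ) (S : Matrix (Fin p) (Fin p) ℝ) (w : TrtSeq p t → ℝ)
    (i j : Fin 2) : ℝ :=
  (ChatD n S w i j).trace

/-- Fisher information matrix `C_{d,τ0,λ0}` for the direct treatment effects under the
proportional model. -/
def CInfo {p t : ℕ} (n : ℕ) (S : Matrix (Fin p) (Fin p) ℝ) (w : TrtSeq p t → ℝ)
    (τ0 : Fin t → ℝ) (l0 : ℝ) : Matrix (Fin t) (Fin t) ℝ :=
  CD n S w 0 0 + l0 • (CD n S w 0 1 + CD n S w 1 0) + (l0 ^ 2) • CD n S w 1 1 -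
    (τ0 ⬝ᵥ (CD n S w 1 1 *ᵥ τ0))⁻¹ •
      ((CD n S w 0 1 + l0 • CD n S w 1 1) * vecMulVec τ0 τ0 *
        (CD n S w 1 0 + l0 • CD n S w 1 1))

/-- Permutation matrix `S_σ` with `(S_σ)_{j,i} = 1` iff `i = σ j`. -/
def Smat {t : ℕ} (σ : Equiv.Perm (Fin t)) : Matrix (Fin t) (Fin t) ℝ :=
  Matrix.of fun j i => if i = σ j then 1 else 0

/-- The relabelled sequence `σ ∘ s`. -/
def permSeq {p t : ℕ} (σ : Equiv.Perm (Fin t)) (s : TrtSeq p t) : TrtSeq p t := fun k => σ (s k)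

/-- The design `σ d`, with weights `(σd)_s = p_{σ⁻¹ ∘ s}`. -/
def permDesign {p t : ℕ} (σ : Equiv.Perm (Fin t)) (w : TrtSeq p t → ℝ) : TrtSeq p t → ℝ :=
  fun s => w (permSeq σ⁻¹ s)

/-- A design is symmetric if its weights are invariant under treatment relabelling. -/
def IsSymmetricDesign {p t : ℕ} (w : TrtSeq p t → ℝ) : Prop :=
  ∀ (σ : Equiv.Perm (Fin t)) (s : TrtSeq p t), w (permSeq σ s) = w s

/-- The symmetrized design `d*` with weights `p*_s = (1/t!) ∑_σ p_{σ⁻¹ ∘ s}`. -/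
def symmetrize {p t : ℕ} (w : TrtSeq p t → ℝ) : TrtSeq p t → ℝ :=
  fun s => ((Nat.factorial t : ℝ))⁻¹ * ∑ σ : Equiv.Perm (Fin t), permDesign σ w s

/-- `q_s(x) = c_{s11} + 2 c_{s12} x + c_{s22} x²`. -/
def qSeq {p t : ℕ} (S : Matrix (Fin p) (Fin p) ℝ) (s : TrtSeq p t) (x : ℝ) : ℝ :=
  cseq S s 0 0 + 2 * cseq S s 0 1 * x + cseq S s 1 1 * x ^ 2

/-- `q(x) = max_{s ∈ S} q_s(x)`. -/
def qMax (p t : ℕ) (S : Matrix (Fin p) (Fin p) ℝ) (x : ℝ) : ℝ :=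
  sSup (Set.range fun s : TrtSeq p t => qSeq S s x)

/-- `y* = inf_x q(x)`. -/
def yStar (p t : ℕ) (S : Matrix (Fin p) (Fin p) ℝ) : ℝ := ⨅ x : ℝ, qMax p t S x

/-- `q_d(x) = ∑_s p_s q_s(x)`. -/
def qD {p t : ℕ} (S : Matrix (Fin p) (Fin p) ℝ) (w : TrtSeq p t → ℝ) (x : ℝ) : ℝ :=
  ∑ s : TrtSeq p t, w s * qSeq S s x

/-- `x_d = -c_{d12}/c_{d22}`. -/
def xD {p t : ℕ} (n : ℕ) (S : Matrix (Fin p) (Fin p) ℝ) (w : TrtSeq p t → ℝ) : ℝ :=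
  -(cD n S w 0 1) / cD n S w 1 1

/-- An exchangeable prior: a probability measure on `{τ : 1'τ = 0, τ ≠ 0}` that is
invariant under all coordinate permutations of `ℝ^t`. -/
def IsExchangeablePrior {t : ℕ} (g : Measure (Fin t → ℝ)) : Prop :=
  IsProbabilityMeasure g ∧
    g {τ : Fin t → ℝ | ¬((∑ i, τ i) = 0 ∧ τ ≠ 0)} = 0 ∧
    ∀ σ : Equiv.Perm (Fin t), Measure.map (fun τ i => τ (σ i)) g = g

/-- `m_d(τ0) = min {ℓ' C_{d,τ0,λ0} ℓ : 1'ℓ = 0, ℓ'ℓ = 1}`. -/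
def mD {p t : ℕ} (n : ℕ) (S : Matrix (Fin p) (Fin p) ℝ) (w : TrtSeq p t → ℝ) (l0 : ℝ)
    (τ0 : Fin t → ℝ) : ℝ :=
  sInf {v : ℝ | ∃ l : Fin t → ℝ, (∑ i, l i) = 0 ∧ l ⬝ᵥ l = 1 ∧
    v = l ⬝ᵥ (CInfo n S w τ0 l0 *ᵥ l)}

/-- The E-criterion value `E_{g,λ0}(d) = ∫ m_d(τ0) g(dτ0)`. -/
def Ecrit {p t : ℕ} (n : ℕ) (S : Matrix (Fin p) (Fin p) ℝ) (g : Measure (Fin t → ℝ))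
    (l0 : ℝ) (w : TrtSeq p t → ℝ) : ℝ :=
  ∫ τ0, mD n S w l0 τ0 ∂g

/-- Competing designs for E-optimality: designs with a.e. positive `τ0' C_{d22} τ0`
and `g`-integrable `m_d`. -/
def EAdmissible {p t : ℕ} (n : ℕ) (S : Matrix (Fin p) (Fin p) ℝ) (g : Measure (Fin t → ℝ))
    (l0 : ℝ) (w : TrtSeq p t → ℝ) : Prop :=
  IsDesign w ∧ (∀ᵐ τ0 ∂g, 0 < τ0 ⬝ᵥ (CD n S w 1 1 *ᵥ τ0)) ∧
    Integrable (mD n S w l0) g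

/-- `d` is `E_{g,λ0}`-optimal. -/
def EOptimal {p t : ℕ} (n : ℕ) (S : Matrix (Fin p) (Fin p) ℝ) (g : Measure (Fin t → ℝ))
    (l0 : ℝ) (w : TrtSeq p t → ℝ) : Prop :=
  ∀ w' : TrtSeq p t → ℝ, EAdmissible n S g l0 w' → Ecrit n S g l0 w' ≤ Ecrit n S g l0 w

/-- A pseudo symmetric design: treatments equireplicated in each period,
and all `C_{dij}` completely symmetric. -/
def IsPseudoSymmetric {p t : ℕ} (n : ℕ) (S : Matrix (Fin p) (Fin p) ℝ)
    (w : TrtSeq p t → ℝ) : Prop :=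
  (∀ (k : Fin p) (i : Fin t),
    (∑ s ∈ Finset.univ.filter fun s : TrtSeq p t => s k = i, w s) = 1 / (t : ℝ)) ∧
  ∀ i j : Fin 2, ∃ a b : ℝ, CD n S w i j = a • (1 : Matrix (Fin t) (Fin t) ℝ) + b • Jmat t

/-- Eigenvalues of a (Hermitian) matrix sorted increasingly with multiplicity. -/
def sortedEigs {t : ℕ} (C : Matrix (Fin t) (Fin t) ℝ) : Fin t → ℝ :=
  if h : C.IsHermitian then (fun i => h.eigenvalues (Tuple.sort h.eigenvalues i))
  else fun _ => 0

/-- `Φ_D(C) = (∏_{i=1}^{t-1} a_i)^{1/(t-1)}` (eigenvalues sorted increasingly). -/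
def PhiD {t : ℕ} (C : Matrix (Fin t) (Fin t) ℝ) : ℝ :=
  (∏ i ∈ Finset.univ.filter fun i : Fin t => (i : ℕ) ≠ 0, sortedEigs C i) ^ (((t : ℝ) - 1)⁻¹)

/-- `Φ_A(C) = (t-1)(∑_{i=1}^{t-1} a_i⁻¹)⁻¹` if `a_1 > 0`, else `0`. -/
def PhiA {t : ℕ} (C : Matrix (Fin t) (Fin t) ℝ) : ℝ :=
  if ∀ i : Fin t, (i : ℕ) ≠ 0 → 0 < sortedEigs C i then
    ((t : ℝ) - 1) *
      (∑ i ∈ Finset.univ.filter fun i : Fin t => (i : ℕ) ≠ 0, (sortedEigs C i)⁻¹)⁻¹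
  else 0

/-- `Φ_T(C) = tr(C)/(t-1)`. -/
def PhiT {t : ℕ} (C : Matrix (Fin t) (Fin t) ℝ) : ℝ := C.trace / ((t : ℝ) - 1)

/-- The criterion value `∫ Φ(C_{d,τ0,λ0}) g(dτ0)`. -/
def PhiCrit {p t : ℕ} (n : ℕ) (S : Matrix (Fin p) (Fin p) ℝ)
    (Phi : Matrix (Fin t) (Fin t) ℝ → ℝ) (g : Measure (Fin t → ℝ)) (l0 : ℝ)
    (w : TrtSeq p t → ℝ) : ℝ :=
  ∫ τ0, Phi (CInfo n S w τ0 l0) ∂g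

/-- Competing designs for a `Φ`-criterion. -/
def PhiAdmissible {p t : ℕ} (n : ℕ) (S : Matrix (Fin p) (Fin p) ℝ)
    (Phi : Matrix (Fin t) (Fin t) ℝ → ℝ) (g : Measure (Fin t → ℝ)) (l0 : ℝ)
    (w : TrtSeq p t → ℝ) : Prop :=
  IsDesign w ∧ (∀ᵐ τ0 ∂g, 0 < τ0 ⬝ᵥ (CD n S w 1 1 *ᵥ τ0)) ∧
    Integrable (fun τ0 => Phi (CInfo n S w τ0 l0)) g

/-- `d` is `Φ_{g,λ0}`-optimal. -/
def PhiOptimal {p t : ℕ} (n : ℕ) (S : Matrix (Fin p) (Fin p) ℝ)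
    (Phi : Matrix (Fin t) (Fin t) ℝ → ℝ) (g : Measure (Fin t → ℝ)) (l0 : ℝ)
    (w : TrtSeq p t → ℝ) : Prop :=
  ∀ w' : TrtSeq p t → ℝ, PhiAdmissible n S Phi g l0 w' →
    PhiCrit n S Phi g l0 w' ≤ PhiCrit n S Phi g l0 w

/-- `H_1(s) = F_s`, `H_2(s) = T_s + λ0 F_s` (for estimating `λ`). -/
def Hmat {p t : ℕ} (l0 : ℝ) (i : Fin 2) (s : TrtSeq p t) : Matrix (Fin p) (Fin t) ℝ :=
  if i = 0 then Fmat s else Tmat s + l0 • Fmat s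

/-- `Â_{sij} = B_t H_i(s)' B̃ H_j(s) B_t`. -/
def Ahat {p t : ℕ} (S : Matrix (Fin p) (Fin p) ℝ) (l0 : ℝ) (s : TrtSeq p t) (i j : Fin 2) :
    Matrix (Fin t) (Fin t) ℝ :=
  Bmat t * (Hmat l0 i s)ᵀ * Btil S * Hmat l0 j s * Bmat t

/-- `h_{sij} = tr Â_{sij}`. -/
def hseq {p t : ℕ} (S : Matrix (Fin p) (Fin p) ℝ) (l0 : ℝ) (s : TrtSeq p t) (i j : Fin 2) : ℝ :=
  (Ahat S l0 s i j).trace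

/-- `Â_{dij} = n ∑_s p_s Â_{sij}`. -/
def AhatD {p t : ℕ} (n : ℕ) (S : Matrix (Fin p) (Fin p) ℝ) (l0 : ℝ) (w : TrtSeq p t → ℝ)
    (i j : Fin 2) : Matrix (Fin t) (Fin t) ℝ :=
  (n : ℝ) • ∑ s : TrtSeq p t, w s • Ahat S l0 s i j

/-- `A_{dij} = Â_{dij} - n (∑_s p_s H_i(s) B_t)' B̃ (∑_s p_s H_j(s) B_t)`. -/
def AD {p t : ℕ} (n : ℕ) (S : Matrix (Fin p) (Fin p) ℝ) (l0 : ℝ) (w : TrtSeq p t → ℝ)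
    (i j : Fin 2) : Matrix (Fin t) (Fin t) ℝ :=
  AhatD n S l0 w i j -
    (n : ℝ) • ((∑ s : TrtSeq p t, w s • (Hmat l0 i s * Bmat t))ᵀ * Btil S *
      (∑ s : TrtSeq p t, w s • (Hmat l0 j s * Bmat t)))

/-- `G` is a generalized inverse of `A`. -/
def IsGInv {t : ℕ} (A G : Matrix (Fin t) (Fin t) ℝ) : Prop := A * G * A = A

/-- `A_d(G) = A_{d11} - A_{d12} G A_{d21}` with `A_{d21} = A_{d12}'`. -/
def ADfun {p t : ℕ} (n : ℕ) (S : Matrix (Fin p) (Fin p) ℝ) (l0 : ℝ) (w : TrtSeq p t → ℝ)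
    (G : Matrix (Fin t) (Fin t) ℝ) : Matrix (Fin t) (Fin t) ℝ :=
  AD n S l0 w 0 0 - AD n S l0 w 0 1 * G * (AD n S l0 w 0 1)ᵀ

/-- `r_s(x) = h_{s11} + 2 h_{s12} x + h_{s22} x²`. -/
def rSeq {p t : ℕ} (S : Matrix (Fin p) (Fin p) ℝ) (l0 : ℝ) (s : TrtSeq p t) (x : ℝ) : ℝ :=
  hseq S l0 s 0 0 + 2 * hseq S l0 s 0 1 * x + hseq S l0 s 1 1 * x ^ 2

/-- `r(x) = max_s r_s(x)`. -/
def rMax (p t : ℕ) (S : Matrix (Fin p) (Fin p) ℝ) (l0 : ℝ) (x : ℝ) : ℝ :=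
  sSup (Set.range fun s : TrtSeq p t => rSeq S l0 s x)

/-- `y_0 = inf_x r(x)`. -/
def yZero (p t : ℕ) (S : Matrix (Fin p) (Fin p) ℝ) (l0 : ℝ) : ℝ := ⨅ x : ℝ, rMax p t S l0 x

/-!
Estimating the carryover coefficient costs information: the Schur complement in `C_{d,τ,λ0}` is a
minimum over that coefficient, and completing the square gives, in the direction of `τ` itself,
`τ' C_{d,τ,λ0} τ ≤ τ' (C_{d11} + x (C_{d12} + C_{d21}) + x² C_{d22}) τ` for every `x`. Under an
exchangeable prior the second moments of `τ / ‖τ‖` form a permutation-invariant matrix of trace one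
with zero row sums, hence `B_t / (t - 1)`. Bounding `m_d(τ)` by the Rayleigh quotient at `τ` and
integrating therefore gives `E_{g,λ0}(d) ≤ n q_d(x) / (t - 1) ≤ n q(x) / (t - 1)` for every
competing design.

For a pseudo symmetric design all `C_{dij}` are multiples of `B_t`. If moreover `q_d'(x) = 0`, then
for every contrast `ℓ`
`ℓ' C_{d,τ,λ0} ℓ = n q_d(x) / (t - 1) ℓ'ℓ + (λ0 - x)² c_{d22} / (t - 1) (ℓ'ℓ - (ℓ'τ)² / τ'τ)`.
By Cauchy–Schwarz the minimum over unit contrasts is attained at `τ`, so `m_d(τ)` is the constant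
`n q_d(x) / (t - 1)`. Kushner's conditions say precisely that `q_d'(x*) = 0` and `q_d(x*) = q(x*)`,
so that `d` attains the bound at `x = x*`.
-/

section CompletelySymmetric

variable {t : ℕ}

/-- Complete symmetry of a matrix in the sense of design theory: a linear combination of `I_t`
and `J_t`. It is the second condition of `IsPseudoSymmetric`, imposed there on every `C_{dij}`. -/
def IsCompletelySymmetric (A : Matrix (Fin t) (Fin t) ℝ) : Prop :=
  ∃ a b : ℝ, A = a • (1 : Matrix (Fin t) (Fin t) ℝ) + b • Jmat t

lemma Jmat_eq_vecMulVec (m : ℕ) : Jmat m = vecMulVec 1 1 := by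
  ext i j
  simp [Jmat, vecMulVec]

lemma Jmat_mul_mul_Jmat (A : Matrix (Fin t) (Fin t) ℝ) :
    Jmat t * A * Jmat t = (1 ⬝ᵥ (A *ᵥ 1)) • Jmat t := by
  rw [Jmat_eq_vecMulVec, vecMulVec_mul, vecMulVec_mul_vecMulVec, dotProduct_mulVec]
  ext i j
  simp [vecMulVec]

lemma transpose_Bmat : (Bmat t)ᵀ = Bmat t := by
  ext i j
  simp [Bmat, Jmat, Matrix.one_apply, eq_comm]

lemma Bmat_mulVec_one : Bmat t *ᵥ 1 = 0 := by
  ext i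
  have : (t : ℝ) ≠ 0 := Nat.cast_ne_zero.mpr i.pos.ne'
  rw [Bmat, Jmat_eq_vecMulVec, sub_mulVec, one_mulVec, smul_mulVec, vecMulVec_mulVec]
  simp [this]

lemma Bmat_mulVec_of_sum_eq_zero {v : Fin t → ℝ} (hv : ∑ i, v i = 0) : Bmat t *ᵥ v = v := by
  rw [Bmat, Jmat_eq_vecMulVec, sub_mulVec, one_mulVec, smul_mulVec, vecMulVec_mulVec,
    one_dotProduct, hv, MulOpposite.op_zero, zero_smul, smul_zero, sub_zero]

lemma trace_Bmat (ht : t ≠ 0) : (Bmat t).trace = (t : ℝ) - 1 := by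
  have : (t : ℝ) ≠ 0 := Nat.cast_ne_zero.mpr ht
  simp [Bmat, Jmat, trace, this]

lemma mul_Bmat_of_mulVec_one_eq_zero {m : Type*} {M : Matrix m (Fin t) ℝ} (hM : M *ᵥ 1 = 0) :
    M * Bmat t = M := by
  rw [Bmat, Jmat_eq_vecMulVec, Matrix.mul_sub, Matrix.mul_one, Matrix.mul_smul, mul_vecMulVec, hM,
    zero_vecMulVec, smul_zero, sub_zero]

lemma vecMulVec_one_mul_Bmat {m : Type*} (c : m → ℝ) :
    vecMulVec c (1 : Fin t → ℝ) * Bmat t = 0 := by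
  rw [vecMulVec_mul, ← transpose_Bmat, vecMul_transpose, Bmat_mulVec_one]
  exact ext fun i _ => mul_zero (c i)

lemma IsCompletelySymmetric.eq_smul_Bmat (ht : 2 ≤ t) {A : Matrix (Fin t) (Fin t) ℝ}
    (hA : IsCompletelySymmetric A) (hA1 : A *ᵥ 1 = 0) :
    A = (A.trace / ((t : ℝ) - 1)) • Bmat t := by
  obtain ⟨a, b, hab⟩ := hA
  have haB : A = a • Bmat t := by
    rw [← mul_Bmat_of_mulVec_one_eq_zero hA1, hab, Jmat_eq_vecMulVec, Matrix.add_mul,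
      Matrix.smul_mul, Matrix.smul_mul, vecMulVec_one_mul_Bmat, Matrix.one_mul, smul_zero, add_zero]
  have ht1 : (t : ℝ) - 1 ≠ 0 := sub_ne_zero.mpr (by exact_mod_cast (by omega : t ≠ 1))
  rw [haB, trace_smul, trace_Bmat (by omega), smul_eq_mul, mul_div_cancel_right₀ _ ht1]

lemma isCompletelySymmetric_of_perm_invariant {A : Matrix (Fin t) (Fin t) ℝ}
    (hA : ∀ (σ : Equiv.Perm (Fin t)) (i j : Fin t), A (σ i) (σ j) = A i j) :
    IsCompletelySymmetric A := by
  rcases subsingleton_or_nontrivial (Fin t) with _ | _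
  · refine ⟨A.trace, 0, ?_⟩
    ext i j
    obtain rfl := Subsingleton.elim i j
    simp [trace, Fintype.sum_subsingleton _ i]
  · obtain ⟨i₀, j₀, h₀⟩ := exists_pair_ne (Fin t)
    refine ⟨A i₀ i₀ - A i₀ j₀, A i₀ j₀, ?_⟩
    ext i j
    rcases eq_or_ne i j with rfl | hij
    · simpa [Jmat] using hA (Equiv.swap i i₀) i₀ i₀
    · have htrans : MulAction.IsMultiplyPretransitive (Equiv.Perm (Fin t)) (Fin t) 2 :=
        Equiv.Perm.isMultiplyPretransitive (Fin t) 2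
      obtain ⟨σ, rfl, rfl⟩ := MulAction.is_two_pretransitive_iff.mp htrans h₀ hij
      rw [Equiv.Perm.smul_def, Equiv.Perm.smul_def] at hij ⊢
      simpa [Jmat, Matrix.one_apply_ne hij] using hA σ i₀ j₀

end CompletelySymmetric

section Rayleigh

variable {ι : Type*} [Fintype ι]

/-- The Rayleigh quotient `v'Cv / v'v`; it is `0` at `v = 0`. -/
def rayleigh (C : Matrix ι ι ℝ) (v : ι → ℝ) : ℝ := (v ⬝ᵥ v)⁻¹ * (v ⬝ᵥ (C *ᵥ v))

/-- The values of the quadratic form of `C` at the unit contrasts, whose infimum is the smallest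
eigenvalue of `C` on contrasts: `m_d(τ0)` is `sInf (contrastRange C_{d,τ0,λ0})`. -/
def contrastRange (C : Matrix ι ι ℝ) : Set ℝ :=
  {v | ∃ l : ι → ℝ, ∑ i, l i = 0 ∧ l ⬝ᵥ l = 1 ∧ v = l ⬝ᵥ (C *ᵥ l)}

lemma dotProduct_self_pos {v : ι → ℝ} (hv : v ≠ 0) : 0 < v ⬝ᵥ v :=
  (Finset.sum_nonneg fun i _ => mul_self_nonneg (v i)).lt_of_ne'
    (mt dotProduct_self_eq_zero.mp hv)

lemma mul_self_le_dotProduct_self (v : ι → ℝ) (i : ι) : v i * v i ≤ v ⬝ᵥ v :=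
  Finset.single_le_sum (f := fun k => v k * v k) (fun _ _ => mul_self_nonneg _) (Finset.mem_univ i)

lemma dotProduct_sq_le (u v : ι → ℝ) : (u ⬝ᵥ v) ^ 2 ≤ (u ⬝ᵥ u) * (v ⬝ᵥ v) := by
  simpa only [dotProduct, ← pow_two] using Finset.sum_mul_sq_le_sq_mul_sq Finset.univ u v

lemma isCompact_setOf_dotProduct_self_eq_one : IsCompact {l : ι → ℝ | l ⬝ᵥ l = 1} := by
  refine (isCompact_Icc (a := (-1 : ι → ℝ)) (b := 1)).of_isClosed_subset
    (isClosed_eq (by fun_prop) continuous_const) fun l (hl : l ⬝ᵥ l = 1) => ?_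
  have hi (i : ι) : |l i| ≤ 1 :=
    abs_le_one_iff_mul_self_le_one.mpr (hl ▸ mul_self_le_dotProduct_self l i)
  exact ⟨fun i => (abs_le.mp (hi i)).1, fun i => (abs_le.mp (hi i)).2⟩

lemma bddBelow_contrastRange (C : Matrix ι ι ℝ) : BddBelow (contrastRange C) := by
  have hcont : Continuous fun l : ι → ℝ => l ⬝ᵥ (C *ᵥ l) := by fun_prop
  refine (isCompact_setOf_dotProduct_self_eq_one.bddBelow_image hcont.continuousOn).mono ?_
  rintro _ ⟨l, -, hl, rfl⟩
  exact ⟨l, hl, rfl⟩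

lemma rayleigh_mem_contrastRange (C : Matrix ι ι ℝ) {v : ι → ℝ} (hv : v ≠ 0)
    (hv0 : ∑ i, v i = 0) : rayleigh C v ∈ contrastRange C := by
  have hpos := dotProduct_self_pos hv
  have hr : (√(v ⬝ᵥ v))⁻¹ * (√(v ⬝ᵥ v))⁻¹ = (v ⬝ᵥ v)⁻¹ := by
    rw [← mul_inv, Real.mul_self_sqrt hpos.le]
  refine ⟨(√(v ⬝ᵥ v))⁻¹ • v, ?_, ?_, ?_⟩
  · simp [← Finset.mul_sum, hv0]
  · rw [smul_dotProduct, dotProduct_smul, smul_smul, hr, smul_eq_mul, inv_mul_cancel₀ hpos.ne']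
  · rw [mulVec_smul, smul_dotProduct, dotProduct_smul, smul_smul, hr, smul_eq_mul, rayleigh]

end Rayleigh

section DirectionMoment

variable {ι : Type*} [Fintype ι] {g : Measure (ι → ℝ)}

/-- The matrix `∫ ττ'/(τ'τ) g(dτ)` of second moments of the direction of `τ`. -/
def directionMoment (g : Measure (ι → ℝ)) : Matrix ι ι ℝ :=
  Matrix.of fun i j => ∫ τ, (τ ⬝ᵥ τ)⁻¹ * (τ i * τ j) ∂g

lemma measurable_inv_dotProduct_self_mul (i j : ι) :
    Measurable fun τ : ι → ℝ => (τ ⬝ᵥ τ)⁻¹ * (τ i * τ j) := by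
  simp only [dotProduct]
  fun_prop

lemma abs_inv_dotProduct_self_mul_le_one (τ : ι → ℝ) (i j : ι) :
    |(τ ⬝ᵥ τ)⁻¹ * (τ i * τ j)| ≤ 1 := by
  have hτ : 0 ≤ τ ⬝ᵥ τ := (mul_self_nonneg (τ i)).trans (mul_self_le_dotProduct_self τ i)
  have hij : |τ i * τ j| ≤ τ ⬝ᵥ τ := abs_le_of_sq_le_sq (by
    calc (τ i * τ j) ^ 2 = τ i * τ i * (τ j * τ j) := by ring
      _ ≤ (τ ⬝ᵥ τ) * (τ ⬝ᵥ τ) := mul_le_mul (mul_self_le_dotProduct_self τ i)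
        (mul_self_le_dotProduct_self τ j) (mul_self_nonneg _) hτ
      _ = (τ ⬝ᵥ τ) ^ 2 := (sq _).symm) hτ
  rw [abs_mul, abs_inv, abs_of_nonneg hτ]
  exact inv_mul_le_one_of_le₀ hij hτ

lemma integrable_inv_dotProduct_self_mul [IsFiniteMeasure g] (i j : ι) :
    Integrable (fun τ : ι → ℝ => (τ ⬝ᵥ τ)⁻¹ * (τ i * τ j)) g :=
  .of_bound (measurable_inv_dotProduct_self_mul i j).aestronglyMeasurable 1
    (.of_forall fun τ => abs_inv_dotProduct_self_mul_le_one τ i j)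

lemma rayleigh_eq_sum (M : Matrix ι ι ℝ) :
    rayleigh M = fun τ => ∑ i, ∑ j, M i j * ((τ ⬝ᵥ τ)⁻¹ * (τ j * τ i)) := by
  funext τ
  simp only [rayleigh, mulVec, dotProduct, Finset.mul_sum]
  refine Finset.sum_congr rfl fun i _ => Finset.sum_congr rfl fun j _ => ?_
  ring

lemma integrable_rayleigh [IsFiniteMeasure g] (M : Matrix ι ι ℝ) :
    Integrable (rayleigh M) g := by
  rw [rayleigh_eq_sum]
  exact integrable_finsetSum _ fun i _ => integrable_finsetSum _ fun j _ =>
    (integrable_inv_dotProduct_self_mul j i).const_mul _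

lemma integral_rayleigh [IsFiniteMeasure g] (M : Matrix ι ι ℝ) :
    ∫ τ, rayleigh M τ ∂g = (M * directionMoment g).trace := by
  have hint (i j : ι) : Integrable (fun τ => M i j * ((τ ⬝ᵥ τ)⁻¹ * (τ j * τ i))) g :=
    (integrable_inv_dotProduct_self_mul j i).const_mul _
  rw [rayleigh_eq_sum,
    integral_finsetSum _ fun i _ => integrable_finsetSum _ fun j _ => hint i j]
  simp only [integral_finsetSum _ fun j _ => hint _ j, integral_const_mul, trace, diag_apply,
    mul_apply, directionMoment, of_apply]

lemma directionMoment_apply_perm (hg : ∀ σ : Equiv.Perm ι, g.map (fun τ i => τ (σ i)) = g)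
    (σ : Equiv.Perm ι) (i j : ι) :
    directionMoment g (σ i) (σ j) = directionMoment g i j := by
  have hσ : Measurable fun (τ : ι → ℝ) (i : ι) => τ (σ i) := by fun_prop
  have hnorm (τ : ι → ℝ) : (fun i => τ (σ i)) ⬝ᵥ (fun i => τ (σ i)) = τ ⬝ᵥ τ :=
    Equiv.sum_comp σ fun i => τ i * τ i
  conv_rhs => rw [directionMoment, ← hg σ]
  simp only [directionMoment, of_apply]
  rw [integral_map hσ.aemeasurable (measurable_inv_dotProduct_self_mul i j).aestronglyMeasurable]
  simp only [hnorm]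

lemma trace_directionMoment [IsProbabilityMeasure g] (hg : ∀ᵐ τ ∂g, τ ≠ 0) :
    (directionMoment g).trace = 1 := by
  have h : rayleigh (1 : Matrix ι ι ℝ) =ᵐ[g] fun _ => 1 := by
    filter_upwards [hg] with τ hτ
    rw [rayleigh, one_mulVec, inv_mul_cancel₀ (dotProduct_self_pos hτ).ne']
  rw [← Matrix.one_mul (directionMoment g), ← integral_rayleigh, integral_congr_ae h]
  simp

lemma directionMoment_mulVec_one [IsFiniteMeasure g] (hg : ∀ᵐ τ ∂g, ∑ i, τ i = 0) :
    directionMoment g *ᵥ 1 = 0 := by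
  ext i
  have h : (fun τ => ∑ j, (τ ⬝ᵥ τ)⁻¹ * (τ i * τ j)) =ᵐ[g] fun _ => 0 := by
    filter_upwards [hg] with τ hτ
    rw [← Finset.mul_sum, ← Finset.mul_sum, hτ, mul_zero, mul_zero]
  simp only [mulVec, dotProduct_one, directionMoment, of_apply, Pi.zero_apply]
  rw [← integral_finsetSum _ fun j _ => integrable_inv_dotProduct_self_mul i j, integral_congr_ae h,
    integral_zero]

end DirectionMoment

section Prior

variable {t : ℕ} {g : Measure (Fin t → ℝ)}

/-- A prior on the nonzero contrasts whose directions have the second moments `B_t / (t - 1)` of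
the uniform distribution on unit contrasts. -/
structure IsIsotropicPrior (g : Measure (Fin t → ℝ)) : Prop where
  isProbabilityMeasure : IsProbabilityMeasure g
  ae_contrast : ∀ᵐ τ ∂g, ∑ i, τ i = 0 ∧ τ ≠ 0
  directionMoment_eq : directionMoment g = ((t : ℝ) - 1)⁻¹ • Bmat t

lemma IsIsotropicPrior.integral_rayleigh_eq (hg : IsIsotropicPrior g)
    {M : Matrix (Fin t) (Fin t) ℝ} (hM : M *ᵥ 1 = 0) :
    ∫ τ, rayleigh M τ ∂g = M.trace / ((t : ℝ) - 1) := by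
  have := hg.isProbabilityMeasure
  rw [integral_rayleigh, hg.directionMoment_eq, Matrix.mul_smul,
    mul_Bmat_of_mulVec_one_eq_zero hM, trace_smul, smul_eq_mul, div_eq_inv_mul]

lemma IsExchangeablePrior.isIsotropicPrior (ht : 2 ≤ t) (hg : IsExchangeablePrior g) :
    IsIsotropicPrior g := by
  obtain ⟨hprob, hsupp, hperm⟩ := hg
  have hae : ∀ᵐ τ ∂g, ∑ i, τ i = 0 ∧ τ ≠ 0 := hsupp
  refine ⟨hprob, hae, ?_⟩
  have hsymm := isCompletelySymmetric_of_perm_invariant (directionMoment_apply_perm hperm)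
  rw [hsymm.eq_smul_Bmat ht (directionMoment_mulVec_one (hae.mono fun _ h => h.1)),
    trace_directionMoment (hae.mono fun _ h => h.2), one_div]

end Prior

section InformationMatrices

variable {p t n : ℕ} {S : Matrix (Fin p) (Fin p) ℝ} {w : TrtSeq p t → ℝ}

/-- The design average `∑_s p_s G_i(s) B_t` of the centred incidence matrices. -/
def meanIncidence (w : TrtSeq p t → ℝ) (i : Fin 2) : Matrix (Fin p) (Fin t) ℝ :=
  ∑ s, w s • (Gmat i s * Bmat t)

/-- The information matrix `C_{d11} + x (C_{d12} + C_{d21}) + x² C_{d22}` for the direct effects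
when the carryover effects are known to be `x` times the direct effects. -/
def knownInfo (n : ℕ) (S : Matrix (Fin p) (Fin p) ℝ) (w : TrtSeq p t → ℝ) (x : ℝ) :
    Matrix (Fin t) (Fin t) ℝ :=
  CD n S w 0 0 + x • (CD n S w 0 1 + CD n S w 1 0) + x ^ 2 • CD n S w 1 1

lemma Btil_eq_transpose_mul_mul (hS : S.PosDef) :
    Btil S = (1 - (1 ⬝ᵥ (S⁻¹ *ᵥ 1))⁻¹ • (Jmat p * S⁻¹))ᵀ * S⁻¹ *
      (1 - (1 ⬝ᵥ (S⁻¹ *ᵥ 1))⁻¹ • (Jmat p * S⁻¹)) := by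
  have hinv : (S⁻¹)ᵀ = S⁻¹ := hS.isHermitian.inv
  have hJ : (Jmat p)ᵀ = Jmat p := rfl
  have hJJ : S⁻¹ * Jmat p * S⁻¹ * Jmat p * S⁻¹ =
      (1 ⬝ᵥ (S⁻¹ *ᵥ 1)) • (S⁻¹ * Jmat p * S⁻¹) := by
    rw [Matrix.mul_assoc S⁻¹ (Jmat p), Matrix.mul_assoc S⁻¹ (Jmat p * S⁻¹), Jmat_mul_mul_Jmat,
      Matrix.mul_smul, Matrix.smul_mul, Matrix.mul_assoc]
  have hc (c : ℝ) : c⁻¹ * (c⁻¹ * c) = c⁻¹ := by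
    rcases eq_or_ne c 0 with rfl | h <;> simp [*]
  simp only [transpose_sub, transpose_one, transpose_smul, transpose_mul, hinv, hJ, Matrix.sub_mul,
    Matrix.mul_sub, Matrix.one_mul, Matrix.mul_one, Matrix.smul_mul, Matrix.mul_smul,
    ← Matrix.mul_assoc, hJJ, smul_sub, smul_smul, hc]
  rw [sub_self, sub_zero]
  rfl

lemma posSemidef_Btil (hS : S.PosDef) : (Btil S).PosSemidef := by
  rw [Btil_eq_transpose_mul_mul hS]
  exact hS.inv.posSemidef.conjTranspose_mul_mul_same _

lemma transpose_Btil (hS : S.PosDef) : (Btil S)ᵀ = Btil S :=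
  (posSemidef_Btil hS).isHermitian

lemma trace_transpose_mul_Btil_mul_nonneg (hS : S.PosDef) (X : Matrix (Fin p) (Fin t) ℝ) :
    0 ≤ (Xᵀ * Btil S * X).trace :=
  ((posSemidef_Btil hS).conjTranspose_mul_mul_same X).trace_nonneg

lemma Chat_eq_transpose_mul_mul (s : TrtSeq p t) (i j : Fin 2) :
    Chat S s i j = (Gmat i s * Bmat t)ᵀ * Btil S * (Gmat j s * Bmat t) := by
  simp only [Chat, transpose_mul, transpose_Bmat, Matrix.mul_assoc]

lemma transpose_ChatD (hS : S.PosDef) (i j : Fin 2) :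
    (ChatD n S w i j)ᵀ = ChatD n S w j i := by
  simp only [ChatD, Chat_eq_transpose_mul_mul, transpose_smul, transpose_sum, transpose_mul,
    transpose_transpose, transpose_Btil hS, Matrix.mul_assoc]

lemma CD_eq_ChatD_sub (i j : Fin 2) :
    CD n S w i j =
      ChatD n S w i j - (n : ℝ) • ((meanIncidence w i)ᵀ * Btil S * meanIncidence w j) :=
  rfl

lemma transpose_CD (hS : S.PosDef) (i j : Fin 2) : (CD n S w i j)ᵀ = CD n S w j i := by
  simp only [CD_eq_ChatD_sub, transpose_sub, transpose_ChatD hS, transpose_smul, transpose_mul,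
    transpose_transpose, transpose_Btil hS, Matrix.mul_assoc]

lemma dotProduct_CD_mulVec_comm (hS : S.PosDef) (i j : Fin 2) (u v : Fin t → ℝ) :
    u ⬝ᵥ (CD n S w i j *ᵥ v) = v ⬝ᵥ (CD n S w j i *ᵥ u) := by
  rw [dotProduct_mulVec, ← mulVec_transpose, transpose_CD hS, dotProduct_comm]

lemma CD_mulVec_one (i j : Fin 2) : CD n S w i j *ᵥ 1 = 0 := by
  simp only [CD, ChatD, Chat, sub_mulVec, smul_mulVec, sum_mulVec, ← mulVec_mulVec,
    Bmat_mulVec_one, mulVec_zero, smul_zero, Finset.sum_const_zero, sub_zero]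

lemma knownInfo_mulVec_one (x : ℝ) : knownInfo n S w x *ᵥ 1 = 0 := by
  simp only [knownInfo, add_mulVec, smul_mulVec, CD_mulVec_one, smul_zero, add_zero]

lemma dotProduct_knownInfo_mulVec (hS : S.PosDef) (x : ℝ) (l : Fin t → ℝ) :
    l ⬝ᵥ (knownInfo n S w x *ᵥ l) = l ⬝ᵥ (CD n S w 0 0 *ᵥ l) +
      2 * x * (l ⬝ᵥ (CD n S w 0 1 *ᵥ l)) + x ^ 2 * (l ⬝ᵥ (CD n S w 1 1 *ᵥ l)) := by
  simp only [knownInfo, add_mulVec, smul_mulVec, dotProduct_add, dotProduct_smul, smul_eq_mul,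
    dotProduct_CD_mulVec_comm hS 1 0 l l]
  ring

lemma dotProduct_CInfo_mulVec (hS : S.PosDef) (l0 : ℝ) (τ l : Fin t → ℝ) :
    l ⬝ᵥ (CInfo n S w τ l0 *ᵥ l) = l ⬝ᵥ (knownInfo n S w l0 *ᵥ l) -
      (τ ⬝ᵥ (CD n S w 1 1 *ᵥ τ))⁻¹ *
        (l ⬝ᵥ (CD n S w 0 1 *ᵥ τ) + l0 * (l ⬝ᵥ (CD n S w 1 1 *ᵥ τ))) ^ 2 := by
  change l ⬝ᵥ ((knownInfo n S w l0 - _) *ᵥ l) = _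
  rw [sub_mulVec, dotProduct_sub, smul_mulVec, dotProduct_smul, smul_eq_mul, ← mulVec_mulVec,
    ← mulVec_mulVec, vecMulVec_mulVec]
  simp only [add_mulVec, smul_mulVec, mulVec_smul, dotProduct_add, dotProduct_smul, smul_eq_mul,
    dotProduct_CD_mulVec_comm hS 1 0 τ l, dotProduct_CD_mulVec_comm hS 1 1 τ l, op_smul_eq_smul]
  ring

end InformationMatrices

section TraceQuadratic

variable {p t n : ℕ} {S : Matrix (Fin p) (Fin p) ℝ} {w : TrtSeq p t → ℝ}

lemma cD_eq_sum (i j : Fin 2) : cD n S w i j = n * ∑ s, w s * cseq S s i j := by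
  simp only [cD, ChatD, trace_smul, trace_sum, smul_eq_mul, cseq]

lemma cD_comm (hS : S.PosDef) (i j : Fin 2) : cD n S w i j = cD n S w j i := by
  rw [cD, cD, ← transpose_ChatD hS, trace_transpose]

lemma cD_self_nonneg (hS : S.PosDef) (hw : IsDesign w) (i : Fin 2) : 0 ≤ cD n S w i i := by
  rw [cD_eq_sum]
  refine mul_nonneg n.cast_nonneg (Finset.sum_nonneg fun s _ => mul_nonneg (hw.1 s) ?_)
  rw [cseq, Chat_eq_transpose_mul_mul]
  exact trace_transpose_mul_Btil_mul_nonneg hS _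

lemma natCast_mul_qD (x : ℝ) :
    n * qD S w x = cD n S w 0 0 + 2 * cD n S w 0 1 * x + cD n S w 1 1 * x ^ 2 := by
  simp only [cD_eq_sum, qD, qSeq, mul_add, Finset.sum_add_distrib, Finset.mul_sum, Finset.sum_mul]
  congr 1
  · congr 1
    exact Finset.sum_congr rfl fun s _ => by ring
  · exact Finset.sum_congr rfl fun s _ => by ring

lemma differentiable_qSeq (s : TrtSeq p t) : Differentiable ℝ (qSeq S s) := by
  unfold qSeq
  fun_prop

lemma deriv_qD (x : ℝ) : deriv (qD S w) x = ∑ s, w s * deriv (qSeq S s) x := by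
  unfold qD
  rw [deriv_fun_sum fun s _ => (differentiable_qSeq s x).const_mul _]
  simp only [deriv_const_mul_field]

lemma natCast_mul_deriv_qD (x : ℝ) :
    n * deriv (qD S w) x = 2 * (cD n S w 0 1 + x * cD n S w 1 1) := by
  have h : HasDerivAt (fun y => cD n S w 0 0 + 2 * cD n S w 0 1 * y + cD n S w 1 1 * y ^ 2)
      (2 * cD n S w 0 1 * 1 + cD n S w 1 1 * (2 * x)) x := by
    simpa using (((hasDerivAt_id x).const_mul (2 * cD n S w 0 1)).const_add (cD n S w 0 0)).fun_add
      ((hasDerivAt_pow 2 x).const_mul (cD n S w 1 1))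
  rw [← deriv_const_mul_field, funext natCast_mul_qD, h.deriv]
  ring

lemma deriv_qD_eq_sum_filter {x y : ℝ} (hsupp : ∀ s, qSeq S s x ≠ y → w s = 0) :
    deriv (qD S w) x =
      ∑ s ∈ Finset.univ.filter (fun s : TrtSeq p t => qSeq S s x = y),
        w s * deriv (qSeq S s) x := by
  rw [deriv_qD, Finset.sum_filter_of_ne fun s _ hs => ?_]
  exact not_imp_comm.mp (hsupp s) (left_ne_zero_of_mul hs)

lemma qD_eq_of_support {x y : ℝ} (hw : IsDesign w) (hsupp : ∀ s, qSeq S s x ≠ y → w s = 0) :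
    qD S w x = y := by
  have h (s : TrtSeq p t) : w s * qSeq S s x = w s * y := by
    rcases eq_or_ne (qSeq S s x) y with hs | hs
    · rw [hs]
    · rw [hsupp s hs, zero_mul, zero_mul]
  simp only [qD, h, ← Finset.sum_mul, hw.2, one_mul]

lemma qD_le_qMax (hw : IsDesign w) (x : ℝ) : qD S w x ≤ qMax p t S x := by
  calc qD S w x ≤ ∑ s, w s * qMax p t S x :=
        Finset.sum_le_sum fun s _ => mul_le_mul_of_nonneg_left
          (le_csSup (Set.finite_range _).bddAbove ⟨s, rfl⟩) (hw.1 s)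
    _ = qMax p t S x := by rw [← Finset.sum_mul, hw.2, one_mul]

end TraceQuadratic

section UpperBound

variable {p t n : ℕ} {S : Matrix (Fin p) (Fin p) ℝ} {w : TrtSeq p t → ℝ}

lemma knownInfo_eq_ChatD_sub (x : ℝ) :
    knownInfo n S w x =
      ChatD n S w 0 0 + x • (ChatD n S w 0 1 + ChatD n S w 1 0) + x ^ 2 • ChatD n S w 1 1 -
        (n : ℝ) • ((meanIncidence w 0 + x • meanIncidence w 1)ᵀ * Btil S *
          (meanIncidence w 0 + x • meanIncidence w 1)) := by
  simp only [knownInfo, CD_eq_ChatD_sub, transpose_add, transpose_smul, Matrix.add_mul,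
    Matrix.mul_add, Matrix.smul_mul, Matrix.mul_smul]
  module

lemma trace_knownInfo_le (hS : S.PosDef) (x : ℝ) :
    (knownInfo n S w x).trace ≤ n * qD S w x := by
  have hmean := trace_transpose_mul_Btil_mul_nonneg hS (meanIncidence w 0 + x • meanIncidence w 1)
  have hcomm := cD_comm (n := n) (w := w) hS 1 0
  calc (knownInfo n S w x).trace
      ≤ cD n S w 0 0 + x * (cD n S w 0 1 + cD n S w 1 0) + x ^ 2 * cD n S w 1 1 := by
        rw [knownInfo_eq_ChatD_sub, trace_sub, trace_smul, trace_add, trace_add, trace_smul,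
          trace_smul, trace_add]
        exact sub_le_self _ (mul_nonneg n.cast_nonneg hmean)
    _ = n * qD S w x := by
        rw [natCast_mul_qD, hcomm]
        ring

lemma dotProduct_CInfo_mulVec_le (hS : S.PosDef) (l0 x : ℝ) {τ : Fin t → ℝ}
    (hτ : 0 < τ ⬝ᵥ (CD n S w 1 1 *ᵥ τ)) :
    τ ⬝ᵥ (CInfo n S w τ l0 *ᵥ τ) ≤ τ ⬝ᵥ (knownInfo n S w x *ᵥ τ) := by
  rw [dotProduct_CInfo_mulVec hS, dotProduct_knownInfo_mulVec hS, dotProduct_knownInfo_mulVec hS]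
  generalize τ ⬝ᵥ (CD n S w 0 0 *ᵥ τ) = a, τ ⬝ᵥ (CD n S w 0 1 *ᵥ τ) = b,
    τ ⬝ᵥ (CD n S w 1 1 *ᵥ τ) = c at *
  have hsquare : a + 2 * x * b + x ^ 2 * c -
      (a + 2 * l0 * b + l0 ^ 2 * c - c⁻¹ * (b + l0 * c) ^ 2) = c⁻¹ * (b + x * c) ^ 2 := by
    field_simp
    ring
  have hnonneg : 0 ≤ c⁻¹ * (b + x * c) ^ 2 := by positivity
  linarith

lemma mD_le_rayleigh_knownInfo (hS : S.PosDef) (l0 x : ℝ) {τ : Fin t → ℝ}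
    (hτ0 : ∑ i, τ i = 0) (hτ : τ ≠ 0) (hpos : 0 < τ ⬝ᵥ (CD n S w 1 1 *ᵥ τ)) :
    mD n S w l0 τ ≤ rayleigh (knownInfo n S w x) τ :=
  calc mD n S w l0 τ ≤ rayleigh (CInfo n S w τ l0) τ :=
        csInf_le (bddBelow_contrastRange _) (rayleigh_mem_contrastRange _ hτ hτ0)
    _ ≤ rayleigh (knownInfo n S w x) τ :=
        mul_le_mul_of_nonneg_left (dotProduct_CInfo_mulVec_le hS l0 x hpos)
          (inv_nonneg.mpr (dotProduct_self_pos hτ).le)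

lemma Ecrit_le (ht : 2 ≤ t) (hS : S.PosDef) {g : Measure (Fin t → ℝ)} (hg : IsIsotropicPrior g)
    {l0 : ℝ} (hw : EAdmissible n S g l0 w) (x : ℝ) :
    Ecrit n S g l0 w ≤ n * qMax p t S x / ((t : ℝ) - 1) := by
  obtain ⟨hdesign, hpos, hint⟩ := hw
  have := hg.isProbabilityMeasure
  have ht1 : (0 : ℝ) ≤ t - 1 := sub_nonneg.mpr (by exact_mod_cast (by omega : 1 ≤ t))
  calc Ecrit n S g l0 w ≤ ∫ τ, rayleigh (knownInfo n S w x) τ ∂g := by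
        refine integral_mono_ae hint (integrable_rayleigh _) ?_
        filter_upwards [hg.ae_contrast, hpos] with τ hτ hτpos
        exact mD_le_rayleigh_knownInfo hS l0 x hτ.1 hτ.2 hτpos
    _ = (knownInfo n S w x).trace / (t - 1) := hg.integral_rayleigh_eq (knownInfo_mulVec_one x)
    _ ≤ n * qMax p t S x / (t - 1) := by
        gcongr
        exact (trace_knownInfo_le hS x).trans (by gcongr; exact qD_le_qMax hdesign x)

end UpperBound

section PseudoSymmetric

variable {p t n : ℕ} {S : Matrix (Fin p) (Fin p) ℝ} {w : TrtSeq p t → ℝ}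

lemma sum_smul_Gmat_eq_vecMulVec
    (hw : ∀ (k : Fin p) (i : Fin t),
      ∑ s ∈ Finset.univ.filter (fun s : TrtSeq p t => s k = i), w s = 1 / (t : ℝ)) (i : Fin 2) :
    ∃ c : Fin p → ℝ, ∑ s, w s • Gmat i s = vecMulVec c 1 := by
  simp only [Finset.sum_filter] at hw
  rcases eq_or_ne i 0 with hi | hi
  · refine ⟨fun _ => 1 / t, ?_⟩
    ext k j
    simp [Matrix.sum_apply, Gmat, hi, Tmat, vecMulVec, ← hw k j]
  · refine ⟨fun k => if (k : ℕ) = 0 then 0 else 1 / t, ?_⟩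
    ext k j
    rcases eq_or_ne (k : ℕ) 0 with hk | hk
    · simp [Matrix.sum_apply, Gmat, hi, Fmat, hk, vecMulVec]
    · simp [Matrix.sum_apply, Gmat, hi, Fmat, hk, vecMulVec,
        ← hw ⟨(k : ℕ) - 1, (Nat.sub_le _ _).trans_lt k.isLt⟩ j]

lemma IsPseudoSymmetric.meanIncidence_eq_zero (hw : IsPseudoSymmetric n S w) (i : Fin 2) :
    meanIncidence w i = 0 := by
  obtain ⟨c, hc⟩ := sum_smul_Gmat_eq_vecMulVec hw.1 i
  simp only [meanIncidence, ← Matrix.smul_mul, ← Matrix.sum_mul, hc, vecMulVec_one_mul_Bmat]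

lemma IsPseudoSymmetric.CD_eq_smul_Bmat (ht : 2 ≤ t) (hw : IsPseudoSymmetric n S w)
    (i j : Fin 2) : CD n S w i j = (cD n S w i j / ((t : ℝ) - 1)) • Bmat t := by
  have htrace : (CD n S w i j).trace = cD n S w i j := by
    rw [CD_eq_ChatD_sub, hw.meanIncidence_eq_zero j, Matrix.mul_zero, smul_zero, sub_zero, cD]
  rw [← htrace]
  exact IsCompletelySymmetric.eq_smul_Bmat ht (hw.2 i j) (CD_mulVec_one i j)

lemma IsPseudoSymmetric.dotProduct_CInfo_mulVec_eq (ht : 2 ≤ t) (hS : S.PosDef)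
    (hw : IsPseudoSymmetric n S w) {x : ℝ} (hx : deriv (qD S w) x = 0) (l0 : ℝ)
    {τ l : Fin t → ℝ} (hτ : ∑ i, τ i = 0) (hl : ∑ i, l i = 0) :
    l ⬝ᵥ (CInfo n S w τ l0 *ᵥ l) = n * qD S w x / ((t : ℝ) - 1) * (l ⬝ᵥ l) +
      (l0 - x) ^ 2 * (cD n S w 1 1 / ((t : ℝ) - 1)) *
        (l ⬝ᵥ l - (τ ⬝ᵥ τ)⁻¹ * (l ⬝ᵥ τ) ^ 2) := by
  have hquad (i j : Fin 2) {v : Fin t → ℝ} (hv : ∑ i, v i = 0) (u : Fin t → ℝ) :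
      u ⬝ᵥ (CD n S w i j *ᵥ v) = cD n S w i j / ((t : ℝ) - 1) * (u ⬝ᵥ v) := by
    rw [hw.CD_eq_smul_Bmat ht, smul_mulVec, Bmat_mulVec_of_sum_eq_zero hv, dotProduct_smul,
      smul_eq_mul]
  have h01 : cD n S w 0 1 = -(x * cD n S w 1 1) := by
    have := natCast_mul_deriv_qD (n := n) (S := S) (w := w) x
    rw [hx, mul_zero] at this
    linarith
  have hcross : cD n S w 0 1 / ((t : ℝ) - 1) = -(x * (cD n S w 1 1 / ((t : ℝ) - 1))) := by
    rw [h01]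
    ring
  have hq : n * qD S w x / ((t : ℝ) - 1) =
      cD n S w 0 0 / ((t : ℝ) - 1) - x ^ 2 * (cD n S w 1 1 / ((t : ℝ) - 1)) := by
    rw [natCast_mul_qD, h01]
    ring
  rw [dotProduct_CInfo_mulVec hS, dotProduct_knownInfo_mulVec hS, hq]
  simp only [hquad _ _ hτ, hquad _ _ hl, hcross, mul_inv]
  generalize cD n S w 1 1 / ((t : ℝ) - 1) = c
  linear_combination -((l0 - x) ^ 2 * (τ ⬝ᵥ τ)⁻¹ * (l ⬝ᵥ τ) ^ 2) * inv_mul_mul_self c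

lemma IsPseudoSymmetric.mD_eq (ht : 2 ≤ t) (hS : S.PosDef) (hdesign : IsDesign w)
    (hw : IsPseudoSymmetric n S w) {x : ℝ} (hx : deriv (qD S w) x = 0) (l0 : ℝ)
    {τ : Fin t → ℝ} (hτ0 : ∑ i, τ i = 0) (hτ : τ ≠ 0) :
    mD n S w l0 τ = n * qD S w x / ((t : ℝ) - 1) := by
  have hpos := dotProduct_self_pos hτ
  have ht1 : (0 : ℝ) ≤ t - 1 := sub_nonneg.mpr (by exact_mod_cast (by omega : 1 ≤ t))
  have hray : rayleigh (CInfo n S w τ l0) τ = n * qD S w x / ((t : ℝ) - 1) := by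
    rw [rayleigh, hw.dotProduct_CInfo_mulVec_eq ht hS hx l0 hτ0 hτ0]
    field_simp
    ring
  refine IsLeast.csInf_eq ⟨hray ▸ rayleigh_mem_contrastRange _ hτ hτ0, ?_⟩
  rintro _ ⟨l, hl0, hl, rfl⟩
  have hcauchy : (τ ⬝ᵥ τ)⁻¹ * (l ⬝ᵥ τ) ^ 2 ≤ l ⬝ᵥ l := by
    rw [inv_mul_le_iff₀' hpos]
    exact dotProduct_sq_le l τ
  rw [hw.dotProduct_CInfo_mulVec_eq ht hS hx l0 hτ0 hl0, hl, mul_one]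
  exact le_add_of_nonneg_right (mul_nonneg (mul_nonneg (sq_nonneg _)
    (div_nonneg (cD_self_nonneg hS hdesign 1) ht1)) (sub_nonneg.mpr (hl ▸ hcauchy)))

lemma IsPseudoSymmetric.Ecrit_eq (ht : 2 ≤ t) (hS : S.PosDef) (hdesign : IsDesign w)
    (hw : IsPseudoSymmetric n S w) {x : ℝ} (hx : deriv (qD S w) x = 0)
    {g : Measure (Fin t → ℝ)} (hg : IsIsotropicPrior g) (l0 : ℝ) :
    Ecrit n S g l0 w = n * qD S w x / ((t : ℝ) - 1) := by
  have := hg.isProbabilityMeasure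
  have hconst : mD n S w l0 =ᵐ[g] fun _ => n * qD S w x / ((t : ℝ) - 1) :=
    hg.ae_contrast.mono fun τ hτ => hw.mD_eq ht hS hdesign hx l0 hτ.1 hτ.2
  rw [Ecrit, integral_congr_ae hconst, integral_const, probReal_univ, one_smul]

end PseudoSymmetric

theorem stmt11_general {p t n : ℕ} (ht : 2 ≤ t) {S : Matrix (Fin p) (Fin p) ℝ} (hS : S.PosDef)
    {w : TrtSeq p t → ℝ} (hw : IsDesign w) (hps : IsPseudoSymmetric n S w) {x : ℝ}
    (hmax : qD S w x = qMax p t S x) (hcrit : deriv (qD S w) x = 0)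
    {g : Measure (Fin t → ℝ)} (hg : IsIsotropicPrior g) (l0 : ℝ) : EOptimal n S g l0 w := by
  intro w' hw'
  rw [hps.Ecrit_eq ht hS hw hcrit hg, hmax]
  exact Ecrit_le ht hS hg hw' x

/-- a pseudo symmetric design satisfying Kushner's scalar conditions
is `E_{g,λ0}`-optimal for every `λ0` and exchangeable `g`. -/
theorem stmt11 (p t n : ℕ) (hp : 2 ≤ p) (ht : 3 ≤ t) (hn : 1 ≤ n)
    (S : Matrix (Fin p) (Fin p) ℝ) (hS : S.PosDef)
    (xstar : ℝ) (hxs : qMax p t S xstar = yStar p t S)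
    (hxsu : ∀ x : ℝ, qMax p t S x = yStar p t S → x = xstar)
    (w : TrtSeq p t → ℝ) (hw : IsDesign w) (hps : IsPseudoSymmetric n S w)
    (h1 : ∑ s ∈ Finset.univ.filter (fun s : TrtSeq p t => qSeq S s xstar = yStar p t S),
        w s * deriv (qSeq S s) xstar = 0)
    (h2 : ∑ s ∈ Finset.univ.filter (fun s : TrtSeq p t => qSeq S s xstar = yStar p t S),
        w s = 1)
    (h3 : ∀ s : TrtSeq p t, qSeq S s xstar ≠ yStar p t S → w s = 0) :
    ∀ (l0 : ℝ) (g : Measure (Fin t → ℝ)), IsExchangeablePrior g →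
      EOptimal n S g l0 w := by
  intro l0 g hg
  exact stmt11_general (by omega) hS hw hps ((qD_eq_of_support hw h3).trans hxs.symm)
    ((deriv_qD_eq_sum_filter h3).trans h1) (hg.isIsotropicPrior (by omega)) l0
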